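/- Let D be an oriented graph on n vertices with minimum degree δ, 3 ≤ δ ≤ n/3, satisfying the Ore-type condition d(u)+d(v) ≥ n for all non-adjacent u, v. If there is a vertex v₀ with d(v₀) = δ such that the subdigraph induced on N(v₀) is a tournament, then D contains a Hamilton oriented cycle C with σ_max(C) ≥ n − δ − 2. -/

import Mathlib

/-- A digraph given by the arc relation `A` is an oriented graph: no loops and at most
one arc between any two vertices. -/
def IsOriented {V : Type*} (A : V → V → Prop) : Prop :=
  ∀ u v, A u v → u ≠ v ∧ ¬ A v u

/-- The degree of `v` in the underlying graph of the digraph `A`. -/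
noncomputable def deg {V : Type*} [Fintype V] (A : V → V → Prop) (v : V) : ℕ :=
  Nat.card {u : V // A v u ∨ A u v}

/-- `e` lists the vertices of a Hamilton oriented cycle of the digraph `A`:
consecutive vertices are joined by an arc in one of the two directions. -/
def IsHamOrientedCycle {V : Type*} [Fintype V] (A : V → V → Prop)
    (e : ZMod (Fintype.card V) ≃ V) : Prop :=
  ∀ i, A (e i) (e (i + 1)) ∨ A (e (i + 1)) (e i)

/-- The number of forward arcs of the oriented cycle listed by `e`. -/
noncomputable def sigmaPlus {V : Type*} [Fintype V] (A : V → V → Prop)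
    (e : ZMod (Fintype.card V) ≃ V) : ℕ :=
  Nat.card {i : ZMod (Fintype.card V) // A (e i) (e (i + 1))}

/-- The number of backward arcs of the oriented cycle listed by `e`. -/
noncomputable def sigmaMinus {V : Type*} [Fintype V] (A : V → V → Prop)
    (e : ZMod (Fintype.card V) ≃ V) : ℕ :=
  Nat.card {i : ZMod (Fintype.card V) // A (e (i + 1)) (e i)}

/-- `σ_max` of the oriented cycle listed by `e`. -/
noncomputable def sigmaMax {V : Type*} [Fintype V] (A : V → V → Prop)
    (e : ZMod (Fintype.card V) ≃ V) : ℕ :=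
  max (sigmaPlus A e) (sigmaMinus A e)

namespace S19
open Classical

/-- adjacency in the underlying graph -/
def adj {V : Type*} (A : V → V → Prop) (u v : V) : Prop := A u v ∨ A v u

/-- cost of traversing a pair in the given order -/
noncomputable def cst {V : Type*} (A : V → V → Prop) (x y : V) : ℕ := if A x y then 0 else 1

/-- number of consecutive pairs which are not forward arcs -/
noncomputable def bad {V : Type*} (A : V → V → Prop) : List V → ℕ
  | [] => 0
  | [_] => 0
  | x :: y :: l => cst A x y + bad A (y :: l)

section basic
variable {V : Type*} {A : V → V → Prop}

theorem adj_symm {u v : V} (h : adj A u v) : adj A v u := Or.symm h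
theorem adj_comm {u v : V} : adj A u v ↔ adj A v u := ⟨adj_symm, adj_symm⟩
theorem adj_irr (hA : IsOriented A) (u : V) : ¬ adj A u u := by
  rintro (h | h) <;> exact (hA _ _ h).1 rfl
theorem adj_ne (hA : IsOriented A) {u v : V} (h : adj A u v) : u ≠ v := by
  rintro rfl; exact adj_irr hA _ h

theorem cst_le (x y : V) : cst A x y ≤ 1 := by unfold cst; split_ifs <;> omega

theorem cst_add (hA : IsOriented A) {x y : V} (h : adj A x y) : cst A x y + cst A y x = 1 := by
  unfold cst
  rcases h with h | h
  · simp [h, (hA _ _ h).2]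
  · simp [h, (hA _ _ h).2]

@[simp] theorem bad_nil : bad A [] = 0 := rfl
@[simp] theorem bad_single (x : V) : bad A [x] = 0 := rfl
theorem bad_cons_cons (x y : V) (l : List V) :
    bad A (x :: y :: l) = cst A x y + bad A (y :: l) := rfl

theorem bad_cons (x : V) (l : List V) : bad A l ≤ bad A (x :: l) ∧ bad A (x :: l) ≤ bad A l + 1 := by
  cases l with
  | nil => simp
  | cons y l => rw [bad_cons_cons]; have := cst_le (A := A) x y; omega

theorem bad_append_cons (l1 : List V) (x : V) (l2 : List V) :
    bad A (l1 ++ x :: l2) = bad A (l1 ++ [x]) + bad A (x :: l2) := by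
  induction l1 with
  | nil => simp
  | cons a l1 ih =>
    cases l1 with
    | nil => simp [bad_cons_cons]
    | cons b l1 => simp only [List.cons_append, bad_cons_cons] at *; omega

theorem bad_append_cons_cons (l1 : List V) (x y : V) (l2 : List V) :
    bad A (l1 ++ x :: y :: l2) = bad A (l1 ++ [x]) + cst A x y + bad A (y :: l2) := by
  rw [bad_append_cons, bad_cons_cons]; omega

theorem bad_append (l1 l2 : List V) :
    bad A l1 + bad A l2 ≤ bad A (l1 ++ l2) ∧ bad A (l1 ++ l2) ≤ bad A l1 + bad A l2 + 1 := by
  induction l1 with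
  | nil => simp
  | cons a l1 ih =>
    cases l1 with
    | nil => simpa using bad_cons a l2
    | cons b l1 => simp only [List.cons_append, bad_cons_cons] at *; omega

theorem bad_length (l : List V) : bad A l ≤ l.length - 1 := by
  induction l with
  | nil => simp
  | cons a l ih =>
    cases l with
    | nil => simp
    | cons b l =>
      rw [bad_cons_cons]; have := cst_le (A := A) a b
      simp only [List.length_cons] at *; omega

theorem bad_reverse (hA : IsOriented A) (l : List V) (hl : l ≠ []) (hc : l.IsChain (adj A)) :
    bad A l + bad A l.reverse + 1 = l.length := by
  induction l with
  | nil => simp at hl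
  | cons a l ih =>
    cases l with
    | nil => simp
    | cons b l =>
      rw [List.isChain_cons_cons] at hc
      have := ih (by simp) hc.2
      simp only [List.reverse_cons, List.append_assoc, List.cons_append, List.nil_append] at *
      rw [bad_cons_cons, bad_append_cons_cons]
      have := cst_add hA hc.1
      simp at *; omega

theorem chain_reverse {l : List V} (hc : l.IsChain (adj A)) : l.reverse.IsChain (adj A) := by
  rw [List.isChain_reverse]
  exact hc.imp (fun _ _ h => adj_symm h)

/-- split at the last element satisfying a predicate -/
theorem split_last (p : V → Prop) (l : List V) :
    (∀ x ∈ l, ¬ p x) ∨ ∃ l1 x l2, l = l1 ++ x :: l2 ∧ p x ∧ ∀ y ∈ l2, ¬ p y := by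
  induction l with
  | nil => left; simp
  | cons a l ih =>
    rcases ih with h | ⟨l1, x, l2, rfl, hx, h⟩
    · by_cases ha : p a
      · right; exact ⟨[], a, l, rfl, ha, h⟩
      · left; simpa [ha] using h
    · right; exact ⟨a :: l1, x, l2, rfl, hx, h⟩

theorem slot (P1 P2 : V → Prop) (Q : List V) (hQ : Q ≠ []) :
    (∃ l1 p p' l2, Q = l1 ++ p :: p' :: l2 ∧ P1 p ∧ P2 p') ∨
    Q.length ≤ 1 + Q.countP (fun x => ¬ P1 x) + Q.tail.countP (fun x => ¬ P2 x) := by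
  induction Q with
  | nil => simp at hQ
  | cons a Q ih =>
    cases Q with
    | nil => right; simp
    | cons b Q =>
      rcases ih (by simp) with ⟨l1, p, p', l2, h, h1, h2⟩ | h
      · left; exact ⟨a :: l1, p, p', l2, by rw [h]; rfl, h1, h2⟩
      · by_cases ha : P1 a
        · by_cases hb : P2 b
          · left; exact ⟨[], a, b, Q, rfl, ha, hb⟩
          · right
            simp only [List.length_cons, List.tail_cons, List.countP_cons] at *
            simp [hb, ha] at *; omega
        · right
          simp only [List.length_cons, List.tail_cons, List.countP_cons] at *
          simp [ha] at *; omega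

theorem countP_not_all (p : V → Prop) (l : List V) (h : ∀ x ∈ l, ¬ p x) :
    l.countP (fun x => ¬ p x) = l.length := by
  rw [List.countP_eq_length]; simpa using h

theorem chain_mid {l1 l2 : List V} {w : V} (h1 : l1.IsChain (adj A)) (h2 : l2.IsChain (adj A))
    (hh : ∀ x ∈ l1.getLast?, adj A x w) (ht : ∀ x ∈ l2.head?, adj A w x) :
    (l1 ++ w :: l2).IsChain (adj A) := by
  rw [List.isChain_append]
  refine ⟨h1, ?_, by simpa using hh⟩
  rw [List.isChain_cons]
  exact ⟨ht, h2⟩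

end basic
end S19

namespace S19
open Classical
section lemA
variable {V : Type*} {A : V → V → Prop}

theorem stepStart (Q : List V) (w : V) (hQ : Q.IsChain (adj A)) (r : ℕ)
    (l1 : List V) (x : V) (l2 : List V) (hq : Q = l1 ++ x :: l2) (hx : adj A w x)
    (h : (([] : List V) ++ w :: (x :: l2)).IsChain (adj A) →
      bad A Q + r < bad A ([] ++ w :: (x :: l2)) + l1.length) :
    bad A (l1 ++ [x]) + r < cst A w x + l1.length := by
  subst hq
  have hc := (List.isChain_append.1 hQ).2.1
  have := h (by simp only [List.nil_append, List.isChain_cons_cons]; exact ⟨hx, hc⟩)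
  rw [bad_append_cons] at this
  simp only [List.nil_append, bad_cons_cons] at this
  omega

theorem stepMid (Q : List V) (w : V) (hQ : Q.IsChain (adj A)) (r : ℕ)
    (l1 : List V) (x' : V) (B : List V) (x : V) (l2 : List V)
    (hq : Q = l1 ++ x' :: (B ++ x :: l2)) (hx : adj A w x) (hx' : adj A w x')
    (h : ((l1 ++ [x']) ++ w :: (x :: l2)).IsChain (adj A) →
      bad A Q + r < bad A ((l1 ++ [x']) ++ w :: (x :: l2)) + B.length) :
    bad A (x' :: (B ++ [x])) + r < cst A x' w + cst A w x + B.length := by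
  subst hq
  have h1 : (l1 ++ [x']).IsChain (adj A) := by
    apply hQ.infix; exact ⟨[], B ++ x :: l2, by simp⟩
  have h2 : (x :: l2).IsChain (adj A) := by
    apply hQ.infix; exact ⟨l1 ++ x' :: B, [], by simp⟩
  have := h (chain_mid h1 h2 (by simpa using adj_symm hx') (by simpa using hx))
  rw [bad_append_cons, ← List.cons_append, bad_append_cons (x' :: B)] at this
  simp only [List.append_assoc, List.cons_append, List.nil_append] at this
  rw [bad_append_cons l1 x' (w :: _), bad_cons_cons, bad_cons_cons] at this
  omega

theorem stepEnd (Q : List V) (w : V) (hQ : Q.IsChain (adj A)) (r : ℕ)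
    (l1 : List V) (x' : V) (B : List V)
    (hq : Q = l1 ++ x' :: B) (hx' : adj A w x')
    (h : ((l1 ++ [x']) ++ w :: []).IsChain (adj A) →
      bad A Q + r < bad A ((l1 ++ [x']) ++ w :: []) + B.length) :
    bad A (x' :: B) + r < cst A x' w + B.length := by
  subst hq
  have h1 : (l1 ++ [x']).IsChain (adj A) := by
    apply hQ.infix; exact ⟨[], B, by simp⟩
  have := h (chain_mid h1 (by simp) (by simpa using adj_symm hx') (by simp))
  rw [bad_append_cons] at this
  simp only [List.append_assoc, List.cons_append, List.nil_append] at this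
  rw [bad_append_cons l1 x' [w], bad_cons_cons] at this
  simp at this
  omega

theorem lemmaA0 (hA : IsOriented A) (Q : List V) (w : V) (hQ : Q.IsChain (adj A))
    (hn : ∃ x ∈ Q, adj A w x)
    (h0 : ∀ l1 B l2, Q = l1 ++ B ++ l2 → (l1 ++ w :: l2).IsChain (adj A) →
      bad A Q < bad A (l1 ++ w :: l2) + B.length) :
    bad A Q + 1 ≤ Q.countP (fun x => ¬ adj A w x) := by
  have key : ∀ n l1 x l2, l1.length = n → Q = l1 ++ x :: l2 → adj A w x →
      bad A (l1 ++ [x]) + 1 ≤ l1.countP (fun x => ¬ adj A w x) + cst A w x := by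
    intro n
    induction n using Nat.strong_induction_on with
    | _ n ih =>
      intro l1 x l2 hl hq hx
      rcases split_last (adj A w) l1 with hall | ⟨l', x', B, rfl, hx', hB⟩
      · have := stepStart Q w hQ 0 l1 x l2 hq hx (fun hc => h0 [] l1 (x :: l2) (by simpa using hq) hc)
        have := countP_not_all (adj A w) l1 hall
        omega
      · have hq' : Q = l' ++ x' :: (B ++ x :: l2) := by simpa using hq
        have h1 := stepMid Q w hQ 0 l' x' B x l2 hq' hx hx'
          (fun hc => h0 (l' ++ [x']) B (x :: l2) (by simpa using hq) hc)
        have h2 := ih l'.length (by simp at hl; omega) l' x' _ rfl hq' hx'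
        have h3 := countP_not_all (adj A w) B hB
        have h4 := cst_add hA hx'
        have h5 : bad A (l' ++ x' :: B ++ [x]) = bad A (l' ++ [x']) + bad A (x' :: (B ++ [x])) := by
          rw [← bad_append_cons]; simp
        have h6 : (l' ++ x' :: B).countP (fun x => ¬ adj A w x) =
            l'.countP (fun x => ¬ adj A w x) + B.length := by
          rw [List.countP_append, List.countP_cons, h3]; simp [hx']
        rw [h6, h5]
        omega
  rcases split_last (adj A w) Q with hall | ⟨l', x', B, hq, hx', hB⟩
  · obtain ⟨x, hx, hx'⟩ := hn; exact absurd hx' (hall x hx)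
  · have h1 := stepEnd Q w hQ 0 l' x' B hq hx'
      (fun hc => h0 (l' ++ [x']) B [] (by simpa using hq) hc)
    have h2 := key l'.length l' x' _ rfl hq hx'
    have h3 := countP_not_all (adj A w) B hB
    have h4 := cst_add hA hx'
    have h5 := bad_append_cons (A := A) l' x' B
    have h6 : (l' ++ x' :: B).countP (fun x => ¬ adj A w x) =
        l'.countP (fun x => ¬ adj A w x) + B.length := by
      rw [List.countP_append, List.countP_cons, h3]; simp [hx']
    rw [hq, h6, h5]
    omega

theorem lemmaA1 (hA : IsOriented A) (Q : List V) (w : V) (hQ : Q.IsChain (adj A))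
    (hn : ∃ x ∈ Q, adj A w x)
    (h0 : ∀ l1 B l2, Q = l1 ++ B ++ l2 → (l1 ++ w :: l2).IsChain (adj A) →
      bad A Q < bad A (l1 ++ w :: l2) + B.length)
    (h1 : ∀ l1 l2, Q = l1 ++ l2 → (l1 ++ w :: l2).IsChain (adj A) →
      bad A Q + 1 < bad A (l1 ++ w :: l2)) :
    bad A Q + Q.length + 2 ≤ 3 * Q.countP (fun x => ¬ adj A w x) := by
  have key : ∀ n l1 x l2, l1.length = n → Q = l1 ++ x :: l2 → adj A w x →
      bad A (l1 ++ [x]) + l1.length + 2 ≤ 3 * l1.countP (fun x => ¬ adj A w x) + cst A w x := by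
    intro n
    induction n using Nat.strong_induction_on with
    | _ n ih =>
      intro l1 x l2 hl hq hx
      rcases split_last (adj A w) l1 with hall | ⟨l', x', B, rfl, hx', hB⟩
      · have := countP_not_all (adj A w) l1 hall
        rcases Nat.eq_zero_or_pos l1.length with hz | hz
        · have := stepStart Q w hQ 1 l1 x l2 hq hx (fun hc => by
            have := h1 [] (x :: l2) (by rw [List.length_eq_zero_iff] at hz; simpa [hz] using hq) hc
            omega)
          have := cst_le (A := A) w x
          omega
        · have := stepStart Q w hQ 0 l1 x l2 hq hx (fun hc => h0 [] l1 (x :: l2) (by simpa using hq) hc)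
          omega
      · have hq' : Q = l' ++ x' :: (B ++ x :: l2) := by simpa using hq
        have h2 := ih l'.length (by simp at hl; omega) l' x' _ rfl hq' hx'
        have h3 := countP_not_all (adj A w) B hB
        have h4 := cst_add hA hx'
        have h5 : bad A (l' ++ x' :: B ++ [x]) = bad A (l' ++ [x']) + bad A (x' :: (B ++ [x])) := by
          rw [← bad_append_cons]; simp
        have h6 : (l' ++ x' :: B).countP (fun x => ¬ adj A w x) =
            l'.countP (fun x => ¬ adj A w x) + B.length := by
          rw [List.countP_append, List.countP_cons, h3]; simp [hx']
        rw [h6, h5]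
        have h8 := cst_le (A := A) w x
        have h9 := cst_le (A := A) x' w
        rcases Nat.eq_zero_or_pos B.length with hz | hz
        · have h7 := stepMid Q w hQ 1 l' x' B x l2 hq' hx hx'
            (fun hc => by
              have := h1 (l' ++ [x']) (x :: l2)
                (by rw [List.length_eq_zero_iff] at hz; simpa [hz] using hq) hc
              omega)
          simp only [List.length_append, List.length_cons]
          omega
        · have h7 := stepMid Q w hQ 0 l' x' B x l2 hq' hx hx'
            (fun hc => h0 (l' ++ [x']) B (x :: l2) (by simpa using hq) hc)
          simp only [List.length_append, List.length_cons]
          omega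
  rcases split_last (adj A w) Q with hall | ⟨l', x', B, hq, hx', hB⟩
  · obtain ⟨x, hx, hx'⟩ := hn; exact absurd hx' (hall x hx)
  · have h2 := key l'.length l' x' _ rfl hq hx'
    have h3 := countP_not_all (adj A w) B hB
    have h4 := cst_add hA hx'
    have h5 := bad_append_cons (A := A) l' x' B
    have h6 : (l' ++ x' :: B).countP (fun x => ¬ adj A w x) =
        l'.countP (fun x => ¬ adj A w x) + B.length := by
      rw [List.countP_append, List.countP_cons, h3]; simp [hx']
    have h7 : bad A (x' :: B) + (if B.length = 0 then 1 else 0) < cst A x' w + B.length := by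
      apply stepEnd Q w hQ _ l' x' B hq hx'
      intro hc
      split_ifs with hz
      · have := h1 (l' ++ [x']) [] (by rw [List.length_eq_zero_iff] at hz; simpa [hz] using hq) hc
        omega
      · exact h0 (l' ++ [x']) B [] (by simpa using hq) hc
    have h9 := cst_le (A := A) x' w
    have h10 : Q.length = l'.length + B.length + 1 := by rw [hq]; simp; omega
    rw [h10, hq, h6, h5]
    split_ifs at h7 <;> omega

end lemA
end S19

namespace S19
open Classical
section HC
variable {V : Type*} {A : V → V → Prop}

/-- number of neighbours inside `S` -/
noncomputable def dg (A : V → V → Prop) (S : Finset V) (u : V) : ℕ := (S.filter (fun x => adj A u x)).card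

/-- number of non-neighbours inside `S`, excluding the vertex itself -/
noncomputable def miss (A : V → V → Prop) (S : Finset V) (u : V) : ℕ :=
  (S.filter (fun x => x ≠ u ∧ ¬ adj A u x)).card

/-- `P` is a path of the underlying graph inside `S` -/
def IsP (A : V → V → Prop) (S : Finset V) (P : List V) : Prop :=
  P.Nodup ∧ (∀ x ∈ P, x ∈ S) ∧ P.IsChain (adj A)

theorem exists_maxi {α : Type*} (p : α → Prop) (f : α → ℕ) (N : ℕ) (hb : ∀ a, p a → f a ≤ N)
    (he : ∃ a, p a) : ∃ a, p a ∧ ∀ b, p b → f b ≤ f a := by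
  by_contra hcon
  push Not at hcon
  have : ∀ n, ∃ a, p a ∧ n ≤ f a := by
    intro n
    induction n with
    | zero => obtain ⟨a, ha⟩ := he; exact ⟨a, ha, by omega⟩
    | succ n ih =>
      obtain ⟨a, ha, h⟩ := ih
      obtain ⟨b, hb, h'⟩ := hcon a ha
      exact ⟨b, hb, by omega⟩
  obtain ⟨a, ha, h⟩ := this (N + 1)
  have := hb a ha
  omega

theorem IsP.len {S : Finset V} {P : List V} (h : IsP A S P) : P.length ≤ S.card := by
  rw [← List.toFinset_card_of_nodup h.1]
  apply Finset.card_le_card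
  intro x hx; exact h.2.1 x (by simpa using hx)

theorem countP_card (p : V → Prop) [DecidablePred p] {P : List V} (h : P.Nodup) :
    P.countP (fun x => p x) = (P.toFinset.filter p).card := by
  rw [List.countP_eq_length_filter, ← List.toFinset_card_of_nodup (h.filter _)]
  congr 1
  ext x; simp

theorem filter_split (p : V → Prop) [DecidablePred p] {S : Finset V} {P : List V} (h : P.Nodup) (hs : ∀ x ∈ P, x ∈ S) :
    (S.filter p).card = P.countP (fun x => p x) + ((S \ P.toFinset).filter p).card := by
  rw [countP_card p h, ← Finset.card_union_of_disjoint]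
  · congr 1
    ext x; simp only [Finset.mem_filter, Finset.mem_union, Finset.mem_sdiff, List.mem_toFinset]
    constructor
    · rintro ⟨h1, h2⟩; tauto
    · rintro (h1 | h1)
      · exact ⟨hs x h1.1, h1.2⟩
      · exact ⟨h1.1.1, h1.2⟩
  · rw [Finset.disjoint_left]; intro x; simp; tauto

theorem countP_compl (p : V → Prop) (P : List V) :
    P.countP (fun x => p x) + P.countP (fun x => ¬ p x) = P.length := by
  have := P.length_eq_countP_add_countP (fun x => decide (p x))
  simp at *; omega

theorem common (hA : IsOriented A) {S : Finset V} {x y : V} (hx : x ∈ S) (hy : y ∈ S) (hxy : x ≠ y)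
    (hn : ¬ adj A x y) (hd : S.card + 1 ≤ dg A S x + dg A S y) :
    2 ≤ (S.filter (fun z => adj A x z ∧ adj A y z)).card := by
  have h1 := Finset.card_union_add_card_inter (S.filter (fun z => adj A x z)) (S.filter (fun z => adj A y z))
  have h2 : S.filter (fun z => adj A x z) ∪ S.filter (fun z => adj A y z) ⊆ (S.erase x).erase y := by
    intro z hz
    simp only [Finset.mem_union, Finset.mem_filter, Finset.mem_erase] at *
    refine ⟨?_, ?_, ?_⟩
    · rintro rfl
      rcases hz with h | h
      · exact hn h.2
      · exact adj_irr hA _ h.2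
    · rintro rfl
      rcases hz with h | h
      · exact adj_irr hA _ h.2
      · exact hn (adj_symm h.2)
    · tauto
  have h3 := Finset.card_le_card h2
  rw [← Finset.filter_and] at h1
  have h4 : ((S.erase x).erase y).card + 2 = S.card := by
    rw [Finset.card_erase_of_mem, Finset.card_erase_of_mem hx]
    · have : 1 < S.card := Finset.one_lt_card.2 ⟨x, hx, y, hy, hxy⟩
      omega
    · simp [hxy.symm, hy]
  unfold dg at hd
  omega

/-- rotation surgery -/
theorem surgery {S : Finset V} {X M Y : List V} {c w : V} (hw : w ∈ S)
    (hP : IsP A S (X ++ c :: (M ++ Y))) (hwP : w ∉ X ++ c :: (M ++ Y))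
    (h1 : adj A c w) (h2 : ∀ x ∈ M.getLast?, adj A w x) (hM : M ≠ [])
    (h3 : ∀ x ∈ M.head?, ∀ y ∈ Y.head?, adj A x y) :
    IsP A S (X ++ c :: w :: (M.reverse ++ Y)) := by
  obtain ⟨hn, hs, hc⟩ := hP
  refine ⟨?_, ?_, ?_⟩
  · have hp : (X ++ c :: w :: (M.reverse ++ Y)).Perm (w :: (X ++ c :: (M ++ Y))) := by
      have e1 : (X ++ c :: w :: (M.reverse ++ Y)).Perm (X ++ c :: w :: (M ++ Y)) :=
        List.Perm.append_left _ (((M.reverse_perm.append_right Y).cons w).cons c)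
      refine e1.trans ?_
      have := List.perm_middle (a := w) (l₁ := X ++ [c]) (l₂ := M ++ Y)
      simpa using this
    rw [hp.nodup_iff]
    exact List.nodup_cons.2 ⟨hwP, hn⟩
  · intro x hx
    simp only [List.mem_append, List.mem_cons, List.mem_reverse] at hx
    by_cases hxw : x = w
    · exact hxw ▸ hw
    · apply hs; simp only [List.mem_append, List.mem_cons]; tauto
  · have c1 : (X ++ [c]).IsChain (adj A) := hc.infix ⟨[], M ++ Y, by simp⟩
    have c2 : M.IsChain (adj A) := hc.infix ⟨X ++ [c], Y, by simp⟩
    have c3 : Y.IsChain (adj A) := hc.infix ⟨X ++ c :: M, [], by simp⟩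
    have c4 : (M.reverse ++ Y).IsChain (adj A) := by
      rw [List.isChain_append]
      exact ⟨chain_reverse c2, c3, by simpa using h3⟩
    have := chain_mid (w := w) c1 c4 (by simpa using h1) (by
      intro x hx
      rw [List.head?_append_of_ne_nil _ (by simpa using hM), List.head?_reverse] at hx
      exact h2 x hx)
    simpa using this

theorem HC (hA : IsOriented A) (S : Finset V)
    (hd : ∀ x ∈ S, ∀ y ∈ S, x ≠ y → ¬ adj A x y → S.card + 1 ≤ dg A S x + dg A S y)
    (a b : V) (ha : a ∈ S) (hb : b ∈ S) (hab : a ≠ b) :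
    ∃ L, IsP A S L ∧ L.length = S.card ∧ L.head? = some a ∧ L.getLast? = some b := by
  have hex : ∃ P, IsP A S P ∧ P.head? = some a ∧ P.getLast? = some b := by
    by_cases h : adj A a b
    · refine ⟨[a, b], ⟨by simpa using hab, by simp [ha, hb], by simpa using h⟩, by simp, by simp⟩
    · have h2 := common hA ha hb hab h (hd a ha b hb hab h)
      obtain ⟨c, hc⟩ := Finset.card_pos.1 (lt_of_lt_of_le two_pos h2)
      simp only [Finset.mem_filter] at hc
      have := adj_ne hA hc.2.1
      have := adj_ne hA hc.2.2
      refine ⟨[a, c, b], ⟨by simp; tauto, by simp [ha, hb, hc.1], ?_⟩, by simp, by simp⟩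
      simp [hc.2.1, adj_symm hc.2.2]
  obtain ⟨P, ⟨hP, hPa, hPb⟩, hmax⟩ := exists_maxi
    (fun P => IsP A S P ∧ P.head? = some a ∧ P.getLast? = some b) List.length S.card
    (fun P h => h.1.len) hex
  refine ⟨P, hP, ?_, hPa, hPb⟩
  by_contra hlen
  have hlt : P.length < S.card := lt_of_le_of_ne hP.len hlen
  obtain ⟨v, hvS, hvP⟩ : ∃ v ∈ S, v ∉ P := by
    by_contra hcon
    push Not at hcon
    have : S.card ≤ P.toFinset.card := Finset.card_le_card (fun x hx => by simpa using hcon x hx)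
    rw [List.toFinset_card_of_nodup hP.1] at this
    omega
  have haP : a ∈ P := List.mem_of_mem_head? hPa
  have hbP : b ∈ P := List.mem_of_mem_getLast? hPb
  obtain ⟨w, p, hwS, hwP, hpP, hpb, hwp⟩ : ∃ w p, w ∈ S ∧ w ∉ P ∧ p ∈ P ∧ p ≠ b ∧ adj A w p := by
    by_cases h : ∃ p ∈ P, p ≠ b ∧ adj A v p
    · obtain ⟨p, h1, h2, h3⟩ := h; exact ⟨v, p, hvS, hvP, h1, h2, h3⟩
    · push Not at h
      have hva : v ≠ a := by rintro rfl; exact hvP haP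
      have h2 := common hA hvS ha hva (h a haP hab) (hd v hvS a ha hva (h a haP hab))
      obtain ⟨w, hw, hwb⟩ := Finset.exists_mem_ne (lt_of_lt_of_le one_lt_two h2) b
      simp only [Finset.mem_filter] at hw
      exact ⟨w, a, hw.1, fun hw' => h w hw' hwb hw.2.1, haP, hab, adj_symm hw.2.2⟩
  obtain ⟨l1, l2', hq⟩ := List.append_of_mem hpP
  cases l2' with
  | nil => subst hq; simp at hPb; exact hpb hPb
  | cons q l2 =>
  have hqP : q ∈ P := by rw [hq]; simp
  -- any longer path is impossible
  have noLonger : ∀ P', IsP A S P' → P'.head? = some a → P'.getLast? = some b → P'.length ≤ P.length :=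
    fun P' h1 h2 h3 => hmax P' ⟨h1, h2, h3⟩
  have surg : ∀ X c M Y, P = X ++ c :: (M ++ Y) → adj A c w → (∀ x ∈ M.getLast?, adj A w x) → M ≠ [] →
      (∀ x ∈ M.head?, ∀ y ∈ Y.head?, adj A x y) → Y ≠ [] → False := by
    intro X c M Y h h1 h2 h3 h4 h5
    have := noLonger _ (surgery hwS (h ▸ hP) (h ▸ hwP) h1 h2 h3 h4) ?_ ?_
    · rw [h] at this; simp at this
    · rw [h] at hPa; cases X <;> simpa using hPa
    · rw [h] at hPb
      rw [← List.cons_append, ← List.append_assoc, List.getLast?_append_of_ne_nil _ h5] at hPb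
      rw [← List.cons_append, ← List.cons_append, ← List.append_assoc, List.getLast?_append_of_ne_nil _ h5]
      exact hPb
  -- inserting an outside path between p and q
  have ins : ∀ L : List V, L ≠ [] → IsP A S L → (∀ x ∈ L, x ∉ P) → L.head? = some w →
      (∀ x ∈ L.getLast?, adj A x q) → False := by
    intro L hL hLP hout hhead hlast
    have hc1 : (l1 ++ [p]).IsChain (adj A) := hP.2.2.infix ⟨[], q :: l2, by simp [hq]⟩
    have hc2 : (q :: l2).IsChain (adj A) := hP.2.2.infix ⟨l1 ++ [p], [], by simp [hq]⟩
    have := noLonger (l1 ++ [p] ++ (L ++ q :: l2)) ⟨?_, ?_, ?_⟩ ?_ ?_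
    · rw [hq] at this; simp at this
      exact hL this
    · have hp : (l1 ++ [p] ++ (L ++ q :: l2)).Perm (L ++ P) := by
        rw [hq]
        have := (List.perm_append_comm (l₁ := l1 ++ [p]) (l₂ := L)).append_right (q :: l2)
        simpa using this
      rw [hp.nodup_iff, List.nodup_append]
      exact ⟨hLP.1, hP.1, fun x hx y hy hxy => hout x hx (hxy ▸ hy)⟩
    · intro x hx
      by_cases hxL : x ∈ L
      · exact hLP.2.1 x hxL
      · apply hP.2.1; rw [hq]; simp at hx ⊢; tauto
    · rw [List.isChain_append]
      refine ⟨hc1, ?_, ?_⟩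
      · rw [List.isChain_append]; exact ⟨hLP.2.2, hc2, by simpa using hlast⟩
      · rw [List.head?_append_of_ne_nil _ hL, hhead]; simpa using adj_symm hwp
    · rw [hq] at hPa; cases l1 <;> simpa using hPa
    · rw [hq] at hPb
      rw [← List.append_assoc, List.getLast?_append_of_ne_nil _ (by simp)]
      rw [← List.singleton_append, ← List.append_assoc, List.getLast?_append_of_ne_nil _ (by simp)] at hPb
      exact hPb
  have hwq : ¬ adj A w q := by
    intro h
    exact ins [w] (by simp) ⟨by simp, by simpa using hwS, by simp⟩ (by simpa using hwP) rfl (by simpa using h)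
  have hwqne : w ≠ q := by rintro rfl; exact hwP hqP
  have hqS := hP.2.1 q hqP
  have hsum := hd w hwS q hqS hwqne hwq
  have hout : ∀ z ∈ S, z ∉ P → adj A w z → ¬ adj A q z := by
    intro z hz hzP h1 h2
    exact ins [w, z] (by simp) ⟨by simpa using adj_ne hA h1, by simp [hwS, hz], by simpa using h1⟩
      (by simp [hwP, hzP]) rfl (by simpa using adj_symm h2)
  have hslot := slot (adj A w) (adj A q) P (by rintro rfl; simp at haP)
  rcases hslot with ⟨m1, c, d, m2, hm, hc, hd'⟩ | hcount
  · have heq := hq.symm.trans hm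
    rw [List.append_eq_append_iff] at heq
    rcases heq with ⟨t, rfl, ht⟩ | ⟨t, rfl, ht⟩
    · cases t with
      | nil =>
        simp at ht
        obtain ⟨_, rfl, _⟩ := ht
        exact adj_irr hA _ hd'
      | cons t1 t =>
        cases t with
        | nil =>
          simp at ht
          obtain ⟨_, rfl, _⟩ := ht
          exact hwq hc
        | cons t2 t =>
          simp at ht
          obtain ⟨rfl, rfl, ht⟩ := ht
          refine surg l1 p (q :: t ++ [c]) (d :: m2) (by rw [hq, ht]; simp) (adj_symm hwp) ?_ (by simp)
            ?_ (by simp)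
          · intro x hx
            rw [List.getLast?_append_of_ne_nil _ (by simp)] at hx
            simp at hx; rwa [← hx]
          · simpa using hd'
    · cases t with
      | nil =>
        simp at ht
        obtain ⟨_, rfl, _⟩ := ht
        exact adj_irr hA _ hd'
      | cons t1 t =>
        cases t with
        | nil =>
          simp at ht
          obtain ⟨rfl, rfl, _⟩ := ht
          refine surg m1 c [d] (q :: l2) (by rw [hq]; simp) (adj_symm hc) ?_ (by simp) ?_ (by simp)
          · simpa using hwp
          · simpa using adj_symm hd'
        | cons t2 t =>
          simp at ht
          obtain ⟨rfl, rfl, ht⟩ := ht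
          refine surg m1 c (d :: t ++ [p]) (q :: l2) (by rw [hq]; simp) (adj_symm hc) ?_ (by simp)
            ?_ (by simp)
          · intro x hx
            rw [List.getLast?_append_of_ne_nil _ (by simp)] at hx
            simp at hx; rwa [← hx]
          · simpa using adj_symm hd'
  · have e1 := filter_split (fun x => adj A w x) hP.1 hP.2.1
    have e2 := filter_split (fun x => adj A q x) hP.1 hP.2.1
    have e3 := countP_compl (adj A w) P
    have e4 := countP_compl (adj A q) P.tail
    have e5 : P.countP (fun x => adj A q x) ≤ P.tail.countP (fun x => adj A q x) + 1 := by
      cases P with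
      | nil => simp
      | cons x P => rw [List.countP_cons, List.tail_cons]; split_ifs <;> omega
    have e6 : ((S \ P.toFinset).filter (fun x => adj A w x)).card +
        ((S \ P.toFinset).filter (fun x => adj A q x)).card + 1 ≤ (S \ P.toFinset).card := by
      rw [← Finset.card_union_of_disjoint]
      · apply Finset.card_lt_card
        rw [Finset.ssubset_iff_of_subset]
        · refine ⟨w, by simp [hwS, hwP], ?_⟩
          have hqw : ¬ adj A q w := fun h => hwq (adj_symm h)
          simp [adj_irr hA w, hwS, hwP, hqw]
        · intro x; simp; tauto
      · rw [Finset.disjoint_left]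
        intro x; simp
        intro h1 h2 h3 _ _ 
        exact hout x h1 h2 h3
    have e7 : (S \ P.toFinset).card + P.length = S.card := by
      rw [← List.toFinset_card_of_nodup hP.1]
      apply Finset.card_sdiff_add_card_eq_card
      intro x hx; exact hP.2.1 x (by simpa using hx)
    have e8 : P.tail.length + 1 = P.length := by
      have := List.length_pos_of_mem haP
      rw [List.length_tail]; omega
    unfold dg at hsum
    omega

end HC
end S19

namespace S19
open Classical
section core
variable {V : Type*} {A : V → V → Prop}

theorem dg_miss (hA : IsOriented A) {S : Finset V} {u : V} (hu : u ∈ S) :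
    dg A S u + miss A S u + 1 = S.card := by
  unfold dg miss
  have h1 := Finset.card_filter_add_card_filter_not (s := S.erase u) (fun x => adj A u x)
  rw [Finset.card_erase_of_mem hu] at h1
  have h2 : (S.erase u).filter (fun x => adj A u x) = S.filter (fun x => adj A u x) := by
    ext x; simp only [Finset.mem_filter, Finset.mem_erase]
    constructor
    · tauto
    · rintro ⟨h, h'⟩; exact ⟨⟨(adj_ne hA h').symm, h⟩, h'⟩
  have h3 : (S.erase u).filter (fun x => ¬ adj A u x) = S.filter (fun x => x ≠ u ∧ ¬ adj A u x) := by
    ext x; simp only [Finset.mem_filter, Finset.mem_erase]; tauto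
  rw [h2, h3] at h1
  have := Finset.card_pos.2 ⟨u, hu⟩
  omega

theorem IsP.perm {S : Finset V} {L L' : List V} (h : IsP A S L) (hp : L'.Perm L)
    (hc : L'.IsChain (adj A)) : IsP A S L' :=
  ⟨hp.nodup_iff.2 h.1, fun x hx => h.2.1 x (hp.mem_iff.1 hx), hc⟩

theorem IsP.reverse {S : Finset V} {L : List V} (h : IsP A S L) : IsP A S L.reverse :=
  h.perm L.reverse_perm (chain_reverse h.2.2)

theorem IsP.infix {S : Finset V} {L L' : List V} (h : IsP A S L) (hp : L' <:+: L) : IsP A S L' :=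
  ⟨h.1.sublist hp.sublist, fun x hx => h.2.1 x (hp.subset hx), h.2.2.infix hp⟩

theorem chain_app {l1 l2 : List V} {x y : V} (h1 : l1.IsChain (adj A)) (h2 : l2.IsChain (adj A))
    (hx : l1.getLast? = some x) (hy : l2.head? = some y) (h : adj A x y) :
    (l1 ++ l2).IsChain (adj A) := by
  rw [List.isChain_append]
  refine ⟨h1, h2, ?_⟩
  rw [hx, hy]; simpa using h

theorem miss_split {S : Finset V} {P : List V} {u : V} (hP : P.Nodup) (hs : ∀ x ∈ P, x ∈ S)
    (hu : u ∉ P) :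
    miss A S u = P.countP (fun x => ¬ adj A u x) + miss A (S \ P.toFinset) u := by
  unfold miss
  rw [filter_split (fun x => x ≠ u ∧ ¬ adj A u x) hP hs]
  congr 1
  apply List.countP_congr
  intro x hx
  have : x ≠ u := by rintro rfl; exact hu hx
  simp [this]

theorem countP_le_miss {S : Finset V} {P : List V} {u : V} (hP : P.Nodup) (hs : ∀ x ∈ P, x ∈ S)
    (hu : u ∉ P) : P.countP (fun x => ¬ adj A u x) ≤ miss A S u := by
  rw [miss_split hP hs hu]; omega

theorem IsP.sub {S : Finset V} {L : List V} (h : IsP A S L) (hl : L.length = S.card) {x : V}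
    (hx : x ∈ S) : x ∈ L := by
  have h1 : L.toFinset = S := by
    apply Finset.eq_of_subset_of_card_le
    · intro x hx; exact h.2.1 x (by simpa using hx)
    · rw [List.toFinset_card_of_nodup h.1]; omega
  rw [← h1] at hx; simpa using hx

theorem core (hA : IsOriented A) (W : Finset V) (hg : 2 ≤ W.card)
    (star : ∀ L w z, IsP A W L → L.head? = some w → L.getLast? = some z → bad A L + 2 ≤ L.length →
      miss A W w + miss A W z + L.length + 2 ≤ W.card + bad A L)
    (conn : ∀ a ∈ W, ∀ b ∈ W, a ≠ b → ∃ L, IsP A W L ∧ L.head? = some a ∧ L.getLast? = some b)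
    (hT : ∀ k, (∀ u ∈ W, miss A W u ≤ k) → 2 * k + 3 ≤ W.card →
      ∃ L, IsP A W L ∧ L.length = W.card ∧ bad A L ≤ k) : False := by
  have h1 : ∀ a ∈ W, ∀ b ∈ W, a ≠ b → miss A W a + miss A W b + 4 ≤ W.card := by
    intro a ha b hb hab
    obtain ⟨L, hL, hLa, hLb⟩ := conn a ha b hb hab
    have hl : 2 ≤ L.length := by
      match L, hLa, hLb with
      | [x], h1, h2 => simp at h1 h2; exact absurd (h1.symm.trans h2) hab
      | x :: y :: L, _, _ => simp
    have hr := bad_reverse hA L (by rintro rfl; simp at hl) hL.2.2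
    by_cases hb : bad A L + 2 ≤ L.length
    · have := star L a b hL hLa hLb hb
      omega
    · have := star L.reverse b a hL.reverse (by simpa using hLb) (by simpa using hLa)
        (by rw [List.length_reverse]; omega)
      rw [List.length_reverse] at this
      omega
  have h2 : ∀ a ∈ W, ∀ b ∈ W, a ≠ b → 2 * (miss A W a + miss A W b) + 5 ≤ W.card := by
    intro a ha b hb hab
    obtain ⟨L, hL, hLl, hLa, hLb⟩ := HC hA W (by
      intro x hx y hy hxy _
      have := h1 x hx y hy hxy
      have := dg_miss hA hx
      have := dg_miss hA hy
      omega) a b ha hb hab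
    have h4 := h1 a ha b hb hab
    have hr := bad_reverse hA L (by rintro rfl; simp at hLl; omega) hL.2.2
    by_cases hb : 2 * bad A L + 1 ≤ W.card
    · have := star L a b hL hLa hLb (by omega)
      omega
    · have := star L.reverse b a hL.reverse (by simpa using hLb) (by simpa using hLa)
        (by rw [List.length_reverse]; omega)
      rw [List.length_reverse] at this
      omega
  obtain ⟨y, hy, hymax⟩ := Finset.exists_max_image W (miss A W) (Finset.card_pos.1 (by omega))
  set k := miss A W y with hk
  have hgk : 2 * k + 5 ≤ W.card := by
    obtain ⟨x, hx, hxy⟩ := Finset.exists_mem_ne (show 1 < W.card by omega) y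
    have := h2 x hx y hy hxy
    omega
  obtain ⟨L, hL, hLl, hLb⟩ := hT k hymax (by omega)
  have hstar : ∀ L' s t, L'.Perm L → L'.IsChain (adj A) → L'.head? = some s → L'.getLast? = some t →
      bad A L' ≤ k + 2 → miss A W s + miss A W t + 2 ≤ bad A L' := by
    intro L' s t hp hc hs ht hb
    have hl := hp.length_eq
    have := star L' s t (hL.perm hp hc) hs ht (by omega)
    omega
  obtain ⟨L1, L2, hsplit⟩ := List.append_of_mem (hL.sub hLl hy)
  have hnd := hL.1
  have hLc := hL.2.2
  have hL1 : L1 ≠ [] := by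
    rintro rfl
    obtain ⟨z, hz⟩ : ∃ z, L.getLast? = some z := ⟨_, List.getLast?_eq_some_getLast (by simp [hsplit])⟩
    have := hstar L y z (List.Perm.refl _) hLc (by simp [hsplit]) hz (by omega)
    omega
  have hL2 : L2 ≠ [] := by
    rintro rfl
    obtain ⟨w, hw⟩ : ∃ w, L.head? = some w := ⟨_, List.head?_eq_some_head (by simp [hsplit])⟩
    have := hstar L w y (List.Perm.refl _) hLc hw (by simp [hsplit]) (by omega)
    omega
  obtain ⟨w, hw⟩ : ∃ w, L1.head? = some w := ⟨_, List.head?_eq_some_head hL1⟩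
  obtain ⟨v, hv⟩ : ∃ v, L1.getLast? = some v := ⟨_, List.getLast?_eq_some_getLast hL1⟩
  obtain ⟨t, ht⟩ : ∃ t, L2.head? = some t := ⟨_, List.head?_eq_some_head hL2⟩
  obtain ⟨z, hz⟩ : ∃ z, L2.getLast? = some z := ⟨_, List.getLast?_eq_some_getLast hL2⟩
  have hwm := List.mem_of_mem_head? hw
  have hvm := List.mem_of_mem_getLast? hv
  have htm := List.mem_of_mem_head? ht
  have hzm := List.mem_of_mem_getLast? hz
  have p1 : IsP A W (L1 ++ [y]) := hL.infix ⟨[], L2, by simp [hsplit]⟩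
  have p1' : IsP A W L1 := hL.infix ⟨[], y :: L2, by simp [hsplit]⟩
  have p2 : IsP A W (y :: L2) := hL.infix ⟨L1, [], by simp [hsplit]⟩
  have p2' : IsP A W L2 := hL.infix ⟨L1 ++ [y], [], by simp [hsplit]⟩
  have hdisj : ∀ x ∈ L1, x ∉ L2 := by
    rw [hsplit, List.nodup_append] at hnd
    intro x hx hx'
    exact hnd.2.2 x hx x (by simp [hx']) rfl
  have hwz : w ≠ z := by rintro rfl; exact hdisj _ hwm hzm
  have hvt : v ≠ t := by rintro rfl; exact hdisj _ hvm htm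
  by_cases hzw : adj A z w
  · have hb1 := bad_append (A := A) (L1 ++ [y]) L2
    have hb2 := bad_append (A := A) L2 (L1 ++ [y])
    have e : L1 ++ [y] ++ L2 = L := by simp [hsplit]
    rw [e] at hb1
    have := hstar (L2 ++ (L1 ++ [y])) t y (by rw [← e]; exact List.perm_append_comm)
      (chain_app p2'.2.2 p1.2.2 hz (by rw [List.head?_append_of_ne_nil _ hL1]; exact hw) hzw)
      (by rw [List.head?_append_of_ne_nil _ hL2]; exact ht) (by simp) (by omega)
    omega
  have hmw : 1 ≤ miss A W w := Finset.card_pos.2 ⟨z, by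
    simp only [Finset.mem_filter]
    exact ⟨p2'.2.1 z hzm, hwz.symm, fun h => hzw (adj_symm h)⟩⟩
  have hmz : 1 ≤ miss A W z := Finset.card_pos.2 ⟨w, by
    simp only [Finset.mem_filter]
    exact ⟨p1'.2.1 w hwm, hwz, hzw⟩⟩
  rcases slot (adj A t) (adj A z) L1 hL1 with ⟨x1, p, p', x2, hx, hp, hp'⟩ | hc1
  · have e : L = (x1 ++ [p]) ++ ((p' :: x2 ++ [y]) ++ L2) := by rw [hsplit, hx]; simp
    have hb1 := bad_append (A := A) (x1 ++ [p]) ((p' :: x2 ++ [y]) ++ L2)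
    have hb2 := bad_append (A := A) (p' :: x2 ++ [y]) L2
    have hb3 := bad_append (A := A) (x1 ++ [p]) (L2 ++ (p' :: x2 ++ [y]))
    have hb4 := bad_append (A := A) L2 (p' :: x2 ++ [y])
    rw [← e] at hb1
    have := hstar ((x1 ++ [p]) ++ (L2 ++ (p' :: x2 ++ [y]))) w y
      (by rw [e]; exact List.Perm.append_left _ List.perm_append_comm)
      (chain_app (x := p) (y := t) (p1'.2.2.infix ⟨[], p' :: x2, by simp [hx]⟩)
        (chain_app (x := z) (y := p') p2'.2.2 (p1.2.2.infix ⟨x1 ++ [p], [], by simp [hx]⟩) hz (by simp) hp')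
        (by simp) (by rw [List.head?_append_of_ne_nil _ hL2]; exact ht) (adj_symm hp))
      (by rw [hx] at hw; cases x1 <;> simpa using hw)
      (by rw [← List.append_assoc, List.getLast?_append_of_ne_nil _ (by simp),
          List.getLast?_append_of_ne_nil _ (by simp)]; simp) (by omega)
    omega
  rcases slot (adj A w) (adj A v) L2 hL2 with ⟨x1, p, p', x2, hx, hp, hp'⟩ | hc2
  · have e : L = L1 ++ ((y :: x1 ++ [p]) ++ p' :: x2) := by rw [hsplit, hx]; simp
    have hb1 := bad_append (A := A) L1 ((y :: x1 ++ [p]) ++ p' :: x2)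
    have hb2 := bad_append (A := A) (y :: x1 ++ [p]) (p' :: x2)
    have hb3 := bad_append (A := A) (y :: x1 ++ [p]) (L1 ++ p' :: x2)
    have hb4 := bad_append (A := A) L1 (p' :: x2)
    rw [← e] at hb1
    have := hstar ((y :: x1 ++ [p]) ++ (L1 ++ p' :: x2)) y z
      (by rw [e, ← List.append_assoc, ← List.append_assoc]; exact List.perm_append_comm.append_right _)
      (chain_app (x := p) (y := w) (p2.2.2.infix ⟨[], p' :: x2, by simp [hx]⟩)
        (chain_app (x := v) (y := p') p1'.2.2 (p2.2.2.infix ⟨y :: x1 ++ [p], [], by simp [hx]⟩) hv (by simp) hp')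
        (by rw [List.getLast?_append_of_ne_nil _ (by simp)]; simp)
        (by rw [List.head?_append_of_ne_nil _ hL1]; exact hw) (adj_symm hp))
      (by simp)
      (by
        rw [← List.append_assoc, List.getLast?_append_of_ne_nil _ (by simp)]
        rw [hx, ← List.singleton_append (x := p), ← List.append_assoc,
          List.getLast?_append_of_ne_nil _ (by simp)] at hz
        exact hz) (by omega)
    omega
  have c1 := countP_le_miss (A := A) p1'.1 p1'.2.1 (u := t) (fun h => hdisj _ h htm)
  have c2 : L1.tail.countP (fun x => ¬ adj A z x) ≤ miss A W z :=
    countP_le_miss (A := A) p1'.1.tail (fun x hx => p1'.2.1 x (List.mem_of_mem_tail hx))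
      (fun h => hdisj _ (List.mem_of_mem_tail h) hzm)
  have c3 := countP_le_miss (A := A) p2'.1 p2'.2.1 (u := w) (fun h => hdisj _ hwm h)
  have c4 : L2.tail.countP (fun x => ¬ adj A v x) ≤ miss A W v :=
    countP_le_miss (A := A) p2'.1.tail (fun x hx => p2'.2.1 x (List.mem_of_mem_tail hx))
      (fun h => hdisj _ hvm (List.mem_of_mem_tail h))
  have s1 := h2 w (p1'.2.1 w hwm) z (p2'.2.1 z hzm) hwz
  have s2 := h2 v (p1'.2.1 v hvm) t (p2'.2.1 t htm) hvt
  have s3 : L1.length + L2.length + 1 = W.card := by rw [← hLl, hsplit]; simp; omega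
  omega

end core
end S19

namespace S19
open Classical
section comp
variable {V : Type*} {A : V → V → Prop}

theorem compFalse (hA : IsOriented A) (W : Finset V) (s t : V) (hs : s ∈ W) (ht : t ∈ W)
    (hst : adj A s t)
    (star : ∀ L w z, IsP A W L → L.head? = some w → L.getLast? = some z → bad A L + 2 ≤ L.length →
      miss A W w + miss A W z + L.length + 2 ≤ W.card + bad A L)
    (hT : ∀ W' ⊆ W, ∀ k, (∀ u ∈ W', miss A W' u ≤ k) → 2 * k + 3 ≤ W'.card →
      ∃ L, IsP A W' L ∧ L.length = W'.card ∧ bad A L ≤ k) : False := by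
  let G : SimpleGraph V :=
    { Adj := fun x y => x ∈ W ∧ y ∈ W ∧ adj A x y
      symm := ⟨fun x y h => ⟨h.2.1, h.1, adj_symm h.2.2⟩⟩
      loopless := ⟨fun x h => adj_irr hA x h.2.2⟩ }
  have hG : ∀ x y, G.Adj x y ↔ x ∈ W ∧ y ∈ W ∧ adj A x y := fun x y => Iff.rfl
  have hmem : ∀ a x, G.Reachable a x → a ∈ W → x ∈ W := by
    rintro a x ⟨p⟩ ha
    induction p with
    | nil => exact ha
    | cons h p ih => exact ih h.2.1
  set W' := W.filter (fun x => G.Reachable s x) with hW'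
  have hsub : W' ⊆ W := Finset.filter_subset _ _
  have hmiss : ∀ w ∈ W', miss A W w + W'.card = miss A W' w + W.card := by
    intro w hw
    have hd : W = W' ∪ (W \ W') := by rw [Finset.union_sdiff_of_subset hsub]
    have h1 : W.filter (fun x => x ≠ w ∧ ¬ adj A w x) =
        W'.filter (fun x => x ≠ w ∧ ¬ adj A w x) ∪ (W \ W') := by
      ext x
      simp only [Finset.mem_filter, Finset.mem_union, Finset.mem_sdiff]
      constructor
      · rintro ⟨h1, h2⟩
        by_cases h : x ∈ W'
        · left; exact ⟨h, h2⟩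
        · right; exact ⟨h1, h⟩
      · rintro (⟨h1, h2⟩ | ⟨h1, h2⟩)
        · exact ⟨hsub h1, h2⟩
        · refine ⟨h1, ?_, ?_⟩
          · rintro rfl; exact h2 hw
          · intro hadj
            apply h2
            rw [hW', Finset.mem_filter] at hw ⊢
            refine ⟨h1, hw.2.trans ?_⟩
            exact SimpleGraph.Adj.reachable ⟨hw.1, h1, hadj⟩
    have h2 : Disjoint (W'.filter (fun x => x ≠ w ∧ ¬ adj A w x)) (W \ W') := by
      rw [Finset.disjoint_left]; intro x; simp only [Finset.mem_filter, Finset.mem_sdiff]; tauto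
    have h3 := Finset.card_sdiff_add_card_eq_card hsub
    unfold miss
    rw [h1, Finset.card_union_of_disjoint h2]
    omega
  have hsW : s ∈ W' := by rw [hW', Finset.mem_filter]; exact ⟨hs, SimpleGraph.Reachable.refl s⟩
  have htW : t ∈ W' := by
    rw [hW', Finset.mem_filter]; exact ⟨ht, SimpleGraph.Adj.reachable ⟨hs, ht, hst⟩⟩
  apply core hA W' (Finset.one_lt_card.2 ⟨s, hsW, t, htW, adj_ne hA hst⟩)
  · intro L w z hL hw hz hb
    have h1 := hmiss w (hL.2.1 w (List.mem_of_mem_head? hw))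
    have h2 := hmiss z (hL.2.1 z (List.mem_of_mem_getLast? hz))
    have h3 := star L w z ⟨hL.1, fun x hx => hsub (hL.2.1 x hx), hL.2.2⟩ hw hz hb
    have h4 := Finset.card_le_card hsub
    omega
  · intro a ha b hb hab
    rw [hW', Finset.mem_filter] at ha hb
    obtain ⟨p⟩ := ha.2.symm.trans hb.2
    have hp := p.toPath.2
    set q := (p.toPath : G.Walk a b) with hq
    refine ⟨q.support, ⟨hp.support_nodup, ?_, ?_⟩, ?_, ?_⟩
    · intro x hx
      have hax : G.Reachable a x := ⟨q.takeUntil x hx⟩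
      rw [hW', Finset.mem_filter]
      exact ⟨hmem a x hax ha.1, ha.2.trans hax⟩
    · exact q.isChain_adj_support.imp (fun x y h => h.2.2)
    · rw [List.head?_eq_some_head (by simp)]; simp
    · rw [List.getLast?_eq_some_getLast (by simp)]; simp
  · exact hT W' hsub

/-- lexicographically optimal path -/
def Max (A : V → V → Prop) (U : Finset V) (Q : List V) : Prop :=
  IsP A U Q ∧ ∀ P, IsP A U P → P.length + bad A Q ≤ Q.length + bad A P ∧
    (P.length + bad A Q = Q.length + bad A P → P.length ≤ Q.length)

theorem exists_Max (U : Finset V) : ∃ Q, Max A U Q := by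
  obtain ⟨Q, hQ, h⟩ := exists_maxi (fun P => IsP A U P)
    (fun P => (P.length - bad A P) * (U.card + 1) + P.length) (U.card * (U.card + 1) + U.card)
    (fun P hP => by
      have := hP.len
      have : (P.length - bad A P) * (U.card + 1) ≤ U.card * (U.card + 1) :=
        Nat.mul_le_mul_right _ (by omega)
      omega) ⟨[], by simp [IsP]⟩
  refine ⟨Q, hQ, fun P hP => ?_⟩
  have h1 := h P hP
  have h2 := hP.len
  have h3 := hQ.len
  have h4 := bad_length (A := A) P
  have h5 := bad_length (A := A) Q
  have h6 : P.length - bad A P ≤ Q.length - bad A Q := by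
    by_contra hcon
    push Not at hcon
    have : (Q.length - bad A Q + 1) * (U.card + 1) ≤ (P.length - bad A P) * (U.card + 1) :=
      Nat.mul_le_mul_right _ hcon
    rw [Nat.add_mul] at this
    omega
  refine ⟨by omega, fun he => ?_⟩
  have : P.length - bad A P = Q.length - bad A Q := by omega
  simp only [this] at h1
  omega

theorem repl {U : Finset V} {Q X C Y L : List V} (hM : Max A U Q) (hq : Q = X ++ C ++ Y)
    (hL : IsP A U L) (hd : ∀ x ∈ L, x ∉ Q)
    (hX : ∀ x ∈ X.getLast?, ∀ y ∈ (L ++ Y).head?, adj A x y)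
    (hY : ∀ x ∈ L.getLast?, ∀ y ∈ Y.head?, adj A x y) :
    (X ++ (L ++ Y)).length + bad A Q ≤ Q.length + bad A (X ++ (L ++ Y)) ∧
    ((X ++ (L ++ Y)).length + bad A Q = Q.length + bad A (X ++ (L ++ Y)) →
      (X ++ (L ++ Y)).length ≤ Q.length) := by
  apply hM.2
  obtain ⟨hQn, hQs, hQc⟩ := hM.1
  refine ⟨?_, ?_, ?_⟩
  · have hp : (X ++ (L ++ Y)).Perm (L ++ (X ++ Y)) := by
      rw [← List.append_assoc, ← List.append_assoc]
      exact List.perm_append_comm.append_right _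
    have hsub : (X ++ Y).Sublist Q := by
      rw [hq]; simp
    rw [hp.nodup_iff, List.nodup_append]
    exact ⟨hL.1, hQn.sublist hsub, fun x hx y hy hxy => hd x hx (hxy ▸ hsub.subset hy)⟩
  · intro x hx
    by_cases hxL : x ∈ L
    · exact hL.2.1 x hxL
    · apply hQs; rw [hq]; simp at hx ⊢; tauto
  · rw [List.isChain_append, List.isChain_append]
    refine ⟨hQc.infix ⟨[], C ++ Y, by simp [hq]⟩, ⟨hL.2.2, hQc.infix ⟨X ++ C, [], by simp [hq]⟩, hY⟩, hX⟩

theorem starU {U : Finset V} {Q L : List V} {w z : V} (hM : Max A U Q)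
    (hL : IsP A U L) (hd : ∀ x ∈ L, x ∉ Q) (hw : L.head? = some w) (hz : L.getLast? = some z)
    (hb : bad A L + 2 ≤ L.length) (hn : ∃ x ∈ Q, adj A w x) :
    Q.length + L.length ≤ Q.countP (fun x => ¬ adj A w x) + Q.countP (fun x => ¬ adj A z x)
      + bad A L + 1 := by
  have hL0 : L ≠ [] := by rintro rfl; simp at hw
  -- interior replacement
  have r1 : ∀ X x C y Y, Q = X ++ x :: (C ++ y :: Y) → adj A w x → adj A z y →
      L.length ≤ C.length + bad A L + 1 := by
    intro X x C y Y hq hx hy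
    have h := repl (X := X ++ [x]) (C := C) (Y := y :: Y) hM (by simp [hq]) hL hd
      (by rw [List.head?_append_of_ne_nil _ hL0, hw]; simpa using adj_symm hx)
      (by rw [hz]; simpa using hy)
    have b1 := bad_append (A := A) (X ++ [x]) (L ++ y :: Y)
    have b2 := bad_append (A := A) L (y :: Y)
    have b3 := bad_append (A := A) (X ++ [x]) (C ++ y :: Y)
    have b4 := bad_append (A := A) C (y :: Y)
    have e : X ++ [x] ++ (C ++ y :: Y) = Q := by simp [hq]
    rw [e] at b3
    have l1 : Q.length = X.length + 1 + (C.length + (Y.length + 1)) := by rw [hq]; simp; omega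
    have l2 : (X ++ [x] ++ (L ++ y :: Y)).length = X.length + 1 + (L.length + (Y.length + 1)) := by
      simp; omega
    omega
  have r2 : ∀ X x B, Q = X ++ x :: B → adj A w x → L.length ≤ B.length + bad A L := by
    intro X x B hq hx
    have h := repl (X := X ++ [x]) (C := B) (Y := []) hM (by simp [hq]) hL hd
      (by rw [List.head?_append_of_ne_nil _ hL0, hw]; simpa using adj_symm hx)
      (by simp)
    rw [List.append_nil] at h
    have b1 := bad_append (A := A) (X ++ [x]) L
    have b3 := bad_append (A := A) (X ++ [x]) B
    have e : X ++ [x] ++ B = Q := by simp [hq]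
    rw [e] at b3
    have l1 : Q.length = X.length + 1 + B.length := by rw [hq]; simp; omega
    have l2 : (X ++ [x] ++ L).length = X.length + 1 + L.length := by simp; omega
    omega
  have r3 : ∀ y Y, Q = y :: Y → ¬ adj A z y := by
    intro y Y hq hy
    have h := repl (X := []) (C := []) (Y := Q) hM (by simp) hL hd (by simp)
      (by rw [hz, hq]; simpa using hy)
    rw [List.nil_append] at h
    have b1 := bad_append (A := A) L Q
    have l2 : (L ++ Q).length = L.length + Q.length := by simp
    omega
  rcases split_last (adj A w) Q with hall | ⟨l, x, B, hq, hx, hB⟩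
  · obtain ⟨x, hx, hx'⟩ := hn; exact absurd hx' (hall x hx)
  have hr2 := r2 l x B hq hx
  -- the part up to x
  have part1 : (l ++ [x]).length ≤ (l ++ [x]).countP (fun x => ¬ adj A w x) +
      (l ++ [x]).countP (fun x => ¬ adj A z x) := by
    rcases slot (adj A w) (adj A z) (l ++ [x]) (by simp) with ⟨l1, p, p', l2, h, hp, hp'⟩ | h
    · exfalso
      have := r1 l1 p [] p' (l2 ++ B) (by
        rw [hq]
        have : l ++ x :: B = (l ++ [x]) ++ B := by simp
        rw [this, h]; simp) hp hp'
      simp at this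
      omega
    · have : (l ++ [x]).countP (fun x => ¬ adj A z x) =
          (l ++ [x]).tail.countP (fun x => ¬ adj A z x) + 1 := by
        cases l with
        | nil =>
          have := r3 x B (by simpa using hq)
          simp [this]
        | cons a l =>
          have := r3 a (l ++ x :: B) (by simpa using hq)
          simp only [List.cons_append, List.tail_cons, List.countP_cons]
          simp [this]
      omega
  have part2 : L.length ≤ B.countP (fun x => ¬ adj A z x) + bad A L + 1 := by
    have ht : ∀ y ∈ B.take (L.length - 1 - bad A L), ¬ adj A z y := by
      intro y hy hzy
      obtain ⟨C, D, hCD⟩ := List.append_of_mem hy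
      have hB' : B = C ++ y :: (D ++ B.drop (L.length - 1 - bad A L)) := by
        conv_lhs => rw [← List.take_append_drop (L.length - 1 - bad A L) B, hCD]
        simp
      have h1 := r1 l x C y _ (by rw [hq]; congr 2) hx hzy
      have h2 : C.length + 1 ≤ (B.take (L.length - 1 - bad A L)).length := by rw [hCD]; simp
      rw [List.length_take] at h2
      omega
    have h1 := countP_not_all (adj A z) _ ht
    rw [List.length_take] at h1
    have h2 : (B.take (L.length - 1 - bad A L)).countP (fun x => ¬ adj A z x) ≤
        B.countP (fun x => ¬ adj A z x) := (List.take_sublist _ _).countP_le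
    omega
  have c3 := countP_not_all (adj A w) B hB
  have e : Q = (l ++ [x]) ++ B := by simp [hq]
  have f1 := List.countP_append (p := fun x => decide (¬ adj A w x)) (l₁ := l ++ [x]) (l₂ := B)
  have f2 := List.countP_append (p := fun x => decide (¬ adj A z x)) (l₁ := l ++ [x]) (l₂ := B)
  rw [e, f1, f2, List.length_append]
  omega

end comp
end S19

namespace S19
open Classical
section thmT
variable {V : Type*} {A : V → V → Prop}

theorem exists_not_mem {U : Finset V} {P : List V} (h : P.length < U.card) : ∃ v ∈ U, v ∉ P := by
  by_contra hcon
  push Not at hcon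
  have : U.card ≤ P.toFinset.card := Finset.card_le_card (fun x hx => by simpa using hcon x hx)
  have := P.toFinset_card_le
  omega

theorem IsP.mono {U U' : Finset V} {P : List V} (h : IsP A U P) (hs : U ⊆ U') : IsP A U' P :=
  ⟨h.1, fun x hx => hs (h.2.1 x hx), h.2.2⟩

theorem miss_mono {U U' : Finset V} (hs : U ⊆ U') (u : V) : miss A U u ≤ miss A U' u :=
  Finset.card_le_card (Finset.filter_subset_filter _ hs)

theorem step0 (hA : IsOriented A) (U : Finset V) (k : ℕ) (hm : ∀ u ∈ U, miss A U u ≤ k)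
    (hU : 2 * k + 3 ≤ U.card)
    (ih : ∀ U' : Finset V, U'.card < U.card → ∀ k, (∀ u ∈ U', miss A U' u ≤ k) → 2 * k + 3 ≤ U'.card →
      ∃ L, IsP A U' L ∧ L.length = U'.card ∧ bad A L ≤ k) :
    ∃ Q, IsP A U Q ∧ Q.length + 1 = U.card ∧ bad A Q ≤ k := by
  by_cases h : 2 * k + 4 ≤ U.card
  · obtain ⟨x, hx⟩ := Finset.card_pos.1 (show 0 < U.card by omega)
    have hc := Finset.card_erase_of_mem hx
    obtain ⟨L, hL, hl, hb⟩ := ih (U.erase x) (by omega) k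
      (fun u hu => (miss_mono (Finset.erase_subset _ _) u).trans (hm u (Finset.mem_of_mem_erase hu)))
      (by omega)
    exact ⟨L, hL.mono (Finset.erase_subset _ _), by omega, hb⟩
  · obtain ⟨a, ha, b, hb, hab⟩ := Finset.one_lt_card.1 (show 1 < U.card by omega)
    obtain ⟨L, hL, hl, -, -⟩ := HC hA U (by
      intro x hx y hy hxy _
      have := dg_miss hA hx
      have := dg_miss hA hy
      have := hm x hx
      have := hm y hy
      omega) a b ha hb hab
    cases L with
    | nil => simp at hl; omega
    | cons x Q =>
      simp only [List.length_cons] at hl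
      have hQ : IsP A U Q := hL.infix ⟨[x], [], by simp⟩
      have hr := bad_reverse hA Q (by rintro rfl; simp at hl; omega) hQ.2.2
      by_cases hq : bad A Q ≤ k
      · exact ⟨Q, hQ, hl, hq⟩
      · exact ⟨Q.reverse, hQ.reverse, by simpa using hl, by omega⟩

theorem step1 (hA : IsOriented A) (U : Finset V) (k : ℕ) (hm : ∀ u ∈ U, miss A U u ≤ k)
    (hU : 2 * k + 3 ≤ U.card)
    (ih : ∀ U' : Finset V, U'.card < U.card → ∀ k, (∀ u ∈ U', miss A U' u ≤ k) → 2 * k + 3 ≤ U'.card →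
      ∃ L, IsP A U' L ∧ L.length = U'.card ∧ bad A L ≤ k) :
    ∃ Q, IsP A U Q ∧ bad A Q + U.card ≤ Q.length + k := by
  obtain ⟨Q, hQ, hl, hb⟩ := step0 hA U k hm hU ih
  obtain ⟨v, hv, hvQ⟩ := exists_not_mem (show Q.length < U.card by omega)
  have hj := (countP_le_miss (A := A) hQ.1 hQ.2.1 hvQ).trans (hm v hv)
  by_cases h0 : ∀ l1 B l2, Q = l1 ++ B ++ l2 → (l1 ++ v :: l2).IsChain (adj A) →
      bad A Q < bad A (l1 ++ v :: l2) + B.length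
  · have := lemmaA0 hA Q v hQ.2.2 (by
      by_contra hcon
      push Not at hcon
      have := countP_not_all (adj A v) Q hcon
      omega) h0
    exact ⟨Q, hQ, by omega⟩
  · push Not at h0
    obtain ⟨l1, B, l2, hq, hc, hle⟩ := h0
    refine ⟨l1 ++ v :: l2, ⟨?_, ?_, hc⟩, ?_⟩
    · have hsub : (l1 ++ l2).Sublist Q := by rw [hq]; simp
      rw [List.perm_middle.nodup_iff, List.nodup_cons]
      exact ⟨fun h => hvQ (hsub.subset h), hQ.1.sublist hsub⟩
    · intro x hx
      by_cases hxv : x = v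
      · rw [hxv]; exact hv
      · apply hQ.2.1; rw [hq]; simp at hx ⊢; tauto
    · have : Q.length = l1.length + B.length + l2.length := by rw [hq]; simp; omega
      simp only [List.length_append, List.length_cons]
      omega

set_option maxHeartbeats 1000000 in
theorem thmT (hA : IsOriented A) : ∀ n, ∀ U : Finset V, U.card = n → ∀ k,
    (∀ u ∈ U, miss A U u ≤ k) → 2 * k + 3 ≤ U.card →
      ∃ L, IsP A U L ∧ L.length = U.card ∧ bad A L ≤ k := by
  intro n
  induction n using Nat.strong_induction_on with
  | _ n ih0 =>
  intro U hUn k hm hU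
  have ih : ∀ U' : Finset V, U'.card < U.card → ∀ k, (∀ u ∈ U', miss A U' u ≤ k) →
      2 * k + 3 ≤ U'.card → ∃ L, IsP A U' L ∧ L.length = U'.card ∧ bad A L ≤ k :=
    fun U' h => ih0 U'.card (by omega) U' rfl
  obtain ⟨Q0, hQ0, hF0⟩ := step1 hA U k hm hU ih
  obtain ⟨Q, hM⟩ := exists_Max (A := A) U
  have hQ := hM.1
  have hQlen := hQ.len
  have hF : bad A Q + U.card ≤ Q.length + k := by
    have := (hM.2 Q0 hQ0).1
    omega
  set W := U \ Q.toFinset with hW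
  have hWc : W.card + Q.length = U.card := by
    rw [← List.toFinset_card_of_nodup hQ.1]
    apply Finset.card_sdiff_add_card_eq_card
    intro x hx; exact hQ.2.1 x (by simpa using hx)
  have hWm : ∀ w ∈ W, w ∈ U ∧ w ∉ Q := by
    intro w hw; simpa [hW] using hw
  have hj : ∀ w ∈ W, Q.countP (fun x => ¬ adj A w x) + miss A W w ≤ k := by
    intro w hw
    rw [← miss_split hQ.1 hQ.2.1 (hWm w hw).2]
    exact hm w (hWm w hw).1
  have hnb : ∀ w ∈ W, ∃ x ∈ Q, adj A w x := by
    intro w hw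
    by_contra hcon
    push Not at hcon
    have h1 := countP_not_all (adj A w) Q hcon
    have h2 := hj w hw
    omega
  by_cases hedge : ∃ s ∈ W, ∃ t ∈ W, adj A s t
  · exfalso
    obtain ⟨s, hs, t, ht, hst⟩ := hedge
    refine compFalse hA W s t hs ht hst ?_ ?_
    · intro L w z hL hw hz hb
      have hwW := hL.2.1 w (List.mem_of_mem_head? hw)
      have hzW := hL.2.1 z (List.mem_of_mem_getLast? hz)
      have := starU hM (hL.mono Finset.sdiff_subset) (fun x hx => (hWm x (hL.2.1 x hx)).2) hw hz hb
        (hnb w hwW)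
      have h1 := hj w hwW
      have h2 := hj z hzW
      omega
    · intro W' hW' k' h1 h2
      have := Finset.card_le_card hW'
      exact ih W' (by omega) k' h1 h2
  push Not at hedge
  rcases Finset.eq_empty_or_nonempty W with hWe | ⟨w0, hw0⟩
  · rw [hWe] at hWc
    simp at hWc
    exact ⟨Q, hQ, hWc, by omega⟩
  have hWpos := Finset.card_pos.2 ⟨w0, hw0⟩
  have hmissW : ∀ w ∈ W, miss A W w + 1 = W.card := by
    intro w hw
    have h1 := dg_miss hA hw
    have h2 : dg A W w = 0 := by
      unfold dg
      rw [Finset.card_eq_zero, Finset.filter_eq_empty_iff]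
      exact fun x hx => hedge w hw x hx
    omega
  have hA1 : bad A Q + Q.length + 2 ≤ 3 * Q.countP (fun x => ¬ adj A w0 x) := by
    have hnew : ∀ l1 B l2, Q = l1 ++ B ++ l2 → (l1 ++ w0 :: l2).IsChain (adj A) →
        (l1 ++ w0 :: l2).length + bad A Q ≤ Q.length + bad A (l1 ++ w0 :: l2) ∧
        ((l1 ++ w0 :: l2).length + bad A Q = Q.length + bad A (l1 ++ w0 :: l2) →
          (l1 ++ w0 :: l2).length ≤ Q.length) := by
      intro l1 B l2 hq hc
      rw [List.isChain_append] at hc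
      have := repl (X := l1) (C := B) (Y := l2) (L := [w0]) hM hq
        ⟨by simp, by simpa using (hWm w0 hw0).1, by simp⟩ (by simpa using (hWm w0 hw0).2)
        (by simpa using hc.2.2)
        (by simpa using (List.isChain_cons.1 hc.2.1).1)
      simpa using this
    apply lemmaA1 hA Q w0 hQ.2.2 (hnb w0 hw0)
    · intro l1 B l2 hq hc
      have := (hnew l1 B l2 hq hc).1
      have : Q.length = l1.length + B.length + l2.length := by rw [hq]; simp; omega
      simp only [List.length_append, List.length_cons] at *
      omega
    · intro l1 l2 hq hc
      have := hnew l1 [] l2 (by simpa using hq) hc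
      have : Q.length = l1.length + l2.length := by rw [hq]; simp
      simp only [List.length_append, List.length_cons] at *
      omega
  have hjw := hj w0 hw0
  have hmw := hmissW w0 hw0
  -- insertion of all remaining vertices
  have hins : ∀ R : Finset V, R ⊆ W → ∃ P, IsP A U P ∧ (∀ x, x ∈ P ↔ x ∈ Q ∨ x ∈ R) ∧
      P.length = Q.length + R.card ∧ bad A P ≤ bad A Q + 2 * R.card := by
    intro R
    induction R using Finset.induction_on with
    | empty => intro _; exact ⟨Q, hQ, by simp, by simp, by simp⟩
    | insert w R hwR ihR =>
      intro hsub
      obtain ⟨P, hP, hPm, hPl, hPb⟩ := ihR (fun x hx => hsub (Finset.mem_insert_of_mem hx))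
      have hw : w ∈ W := hsub (Finset.mem_insert_self _ _)
      have hRW : R ⊆ W := fun x hx => hsub (Finset.mem_insert_of_mem hx)
      have hwP : w ∉ P := by
        rw [hPm]; rintro (h | h)
        · exact (hWm w hw).2 h
        · exact hwR h
      have hRc : R.card + 1 ≤ W.card := by
        rw [← Finset.card_insert_of_notMem hwR]; exact Finset.card_le_card hsub
      have hcnt : P.countP (fun x => ¬ adj A w x) + (W.card - R.card - 1) ≤ k := by
        refine le_trans ?_ (hm w (hWm w hw).1)
        rw [miss_split hP.1 hP.2.1 hwP]
        refine Nat.add_le_add_left ?_ _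
        have e : (W \ insert w R).card = W.card - R.card - 1 := by
          rw [Finset.card_sdiff_of_subset hsub, Finset.card_insert_of_notMem hwR]; omega
        rw [← e]
        apply Finset.card_le_card
        intro x hx
        rw [Finset.mem_sdiff, Finset.mem_insert, not_or] at hx
        simp only [Finset.mem_filter, Finset.mem_sdiff, List.mem_toFinset, hPm]
        exact ⟨⟨(hWm x hx.1).1, fun h => h.elim (hWm x hx.1).2 hx.2.2⟩, hx.2.1, hedge w hw x hx.1⟩
      have hPne : P ≠ [] := by rintro rfl; simp at hPl; omega
      rcases slot (adj A w) (adj A w) P hPne with ⟨l1, p, p', l2, hq, hp, hp'⟩ | hbad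
      · have hcP := hP.2.2
        refine ⟨(l1 ++ [p]) ++ w :: (p' :: l2), ⟨?_, ?_, ?_⟩, ?_, ?_, ?_⟩
        · rw [List.perm_middle.nodup_iff]
          have e : l1 ++ [p] ++ p' :: l2 = P := by simp [hq]
          rw [e]; exact List.nodup_cons.2 ⟨hwP, hP.1⟩
        · intro x hx
          by_cases hxw : x = w
          · rw [hxw]; exact (hWm w hw).1
          · apply hP.2.1; rw [hq]; simp at hx ⊢; tauto
        · exact chain_mid (hcP.infix ⟨[], p' :: l2, by simp [hq]⟩)
            (hcP.infix ⟨l1 ++ [p], [], by simp [hq]⟩) (by simpa using adj_symm hp) (by simpa using hp')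
        · intro x
          have e : l1 ++ [p] ++ p' :: l2 = P := by simp [hq]
          rw [List.perm_middle.mem_iff, e, List.mem_cons, hPm, Finset.mem_insert]
          exact or_left_comm
        · rw [Finset.card_insert_of_notMem hwR]
          rw [hq] at hPl; simp at hPl ⊢; omega
        · have e : l1 ++ [p] ++ w :: p' :: l2 = l1 ++ p :: w :: (p' :: l2) := by simp
          rw [Finset.card_insert_of_notMem hwR, e, bad_append_cons_cons, bad_cons_cons]
          rw [hq, bad_append_cons_cons] at hPb
          have := cst_le (A := A) p w
          have := cst_le (A := A) w p'
          omega
      · exfalso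
        have : P.tail.countP (fun x => ¬ adj A w x) ≤ P.countP (fun x => ¬ adj A w x) :=
          (List.tail_sublist P).countP_le
        omega
  obtain ⟨P, hP, _, hPl, hPb⟩ := hins W (Finset.Subset.refl _)
  exact ⟨P, hP, by omega, by omega⟩

end thmT
end S19

namespace S19
open Classical
section final
variable {V : Type*} {A : V → V → Prop}

theorem insertTour (v : V) (L : List V) (hL : L.IsChain A) (hv : ∀ x ∈ L, adj A v x) :
    ∃ L' : List V, L'.Perm (v :: L) ∧ L'.IsChain A ∧ (L'.head? = some v ∨ L'.head? = L.head?) := by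
  induction L with
  | nil => exact ⟨[v], List.Perm.refl _, by simp, by simp⟩
  | cons a L ih =>
    by_cases h : A v a
    · exact ⟨v :: a :: L, List.Perm.refl _, by rw [List.isChain_cons_cons]; exact ⟨h, hL⟩, by simp⟩
    · have hav : A a v := (hv a (by simp)).resolve_left h
      rw [List.isChain_cons] at hL
      obtain ⟨L', hp, hc, hh⟩ := ih hL.2 (fun x hx => hv x (by simp [hx]))
      refine ⟨a :: L', (hp.cons a).trans (List.Perm.swap _ _ _), ?_, by simp⟩
      rw [List.isChain_cons]
      refine ⟨?_, hc⟩
      intro y hy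
      rcases hh with hh | hh
      · rw [hh] at hy; simp at hy; rwa [← hy]
      · rw [hh] at hy; exact hL.1 y hy

theorem redei (L : List V) (hn : L.Nodup) (h : ∀ x ∈ L, ∀ y ∈ L, x ≠ y → adj A x y) :
    ∃ L' : List V, L'.Perm L ∧ L'.IsChain A := by
  induction L with
  | nil => exact ⟨[], List.Perm.refl _, by simp⟩
  | cons a L ih =>
    rw [List.nodup_cons] at hn
    obtain ⟨L', hp, hc⟩ := ih hn.2 (fun x hx y hy => h x (by simp [hx]) y (by simp [hy]))
    obtain ⟨L'', hp', hc', -⟩ := insertTour a L' hc (fun x hx => by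
      have hx' := hp.mem_iff.1 hx
      exact h a (by simp) x (by simp [hx']) (by rintro rfl; exact hn.1 hx'))
    exact ⟨L'', hp'.trans (hp.cons a), hc'⟩

theorem bad_zero (L : List V) (h : L.IsChain A) : bad A L = 0 := by
  induction L with
  | nil => rfl
  | cons a L ih =>
    cases L with
    | nil => rfl
    | cons b L =>
      rw [List.isChain_cons_cons] at h
      rw [bad_cons_cons, ih h.2]; simp [cst, h.1]

theorem bad_sum (d : V) (C : List V) :
    bad A C = ∑ i ∈ Finset.range (C.length - 1), cst A (C.getD i d) (C.getD (i + 1) d) := by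
  induction C with
  | nil => simp
  | cons a C ih =>
    cases C with
    | nil => simp
    | cons b C =>
      rw [bad_cons_cons, ih]
      simp only [List.length_cons, Nat.add_sub_cancel]
      rw [Finset.sum_range_succ']
      simp only [List.getD_cons_succ, List.getD_cons_zero]
      rw [add_comm]

theorem toCycle (n : ℕ) (C : List V) (hl : C.length = n) (hn2 : 0 < n) (hn : C.Nodup)
    (hall : ∀ v, v ∈ C) (hc : C.IsChain (adj A)) (s t : V) (hs : C.head? = some s)
    (ht : C.getLast? = some t) (hts : adj A t s) :
    ∃ e : ZMod n ≃ V, (∀ i, A (e i) (e (i + 1)) ∨ A (e (i + 1)) (e i)) ∧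
      n ≤ Nat.card {i : ZMod n // A (e i) (e (i + 1))} + bad A C + 1 := by
  cases n with
  | zero => omega
  | succ m =>
  let f : Fin (m + 1) → V := fun i => C[i.val]'(by rw [hl]; exact i.2)
  have hf : Function.Bijective f := by
    constructor
    · intro i j hij
      have := (hn.getElem_inj_iff (hi := by rw [hl]; exact i.2) (hj := by rw [hl]; exact j.2)).1 hij
      exact Fin.ext this
    · intro v
      obtain ⟨i, hi, h⟩ := List.mem_iff_getElem.1 (hall v)
      exact ⟨⟨i, by omega⟩, h⟩
  let e : Fin (m + 1) ≃ V := Equiv.ofBijective f hf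
  have he : ∀ i : Fin (m + 1), e i = C[i.val]'(by rw [hl]; exact i.2) := fun i => rfl
  refine ⟨(e : ZMod (m + 1) ≃ V), ?_, ?_⟩
  · have key : ∀ i : Fin (m + 1), adj A (e i) (e (i + 1)) := by
      intro i
      rw [he, he]
      by_cases hi : i = Fin.last m
      · subst hi
        have h1 : C[(Fin.last m + 1 : Fin (m + 1)).val]'(by rw [hl]; exact Fin.is_lt _) = s := by
          have : (Fin.last m + 1 : Fin (m + 1)).val = 0 := by simp
          simp only [this]
          rw [List.head?_eq_getElem?, List.getElem?_eq_getElem (by omega)] at hs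
          simpa using hs
        have h2 : C[(Fin.last m).val]'(by rw [hl]; exact Fin.is_lt _) = t := by
          rw [List.getLast?_eq_getElem?, List.getElem?_eq_getElem (by omega)] at ht
          simpa [hl] using ht
        rw [h1, h2]; exact hts
      · have h1 : (i + 1 : Fin (m + 1)).val = i.val + 1 := by
          rw [Fin.val_add_one, if_neg hi]
        have hlt : i.val + 1 < C.length := by
          have := (i + 1 : Fin (m + 1)).2; omega
        have := List.isChain_iff_getElem.1 hc i.val hlt
        simp only [h1]
        exact this
    exact key
  · obtain ⟨d, _⟩ : ∃ d, d ∈ C := ⟨s, List.mem_of_mem_head? hs⟩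
    have hb := bad_sum (A := A) d C
    rw [hl, Nat.add_sub_cancel, Finset.sum_range] at hb
    have h1 : Nat.card {i : Fin m // A (C.getD i.val d) (C.getD (i.val + 1) d)} + bad A C = m := by
      rw [hb, Nat.card_eq_fintype_card, Fintype.card_subtype, Finset.card_filter,
        ← Finset.sum_add_distrib]
      rw [Finset.sum_congr rfl (g := fun _ => 1)]
      · simp
      · intro i _; unfold cst; split_ifs <;> rfl
    have h2 : Nat.card {i : Fin m // A (C.getD i.val d) (C.getD (i.val + 1) d)} ≤
        Nat.card {i : Fin (m + 1) // A (e i) (e (i + 1))} := by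
      apply Nat.card_le_card_of_injective
        (fun i => ⟨i.1.castSucc, by
          have hi := i.2
          have h3 := i.1.2
          rw [he, he]
          rw [List.getD_eq_getElem _ _ (by omega), List.getD_eq_getElem _ _ (by omega)] at hi
          have h1 : (i.1.castSucc + 1 : Fin (m + 1)).val = i.1.val + 1 := by
            rw [Fin.val_add_one, if_neg]
            · simp
            · intro h; have := congrArg Fin.val h; simp at this; omega
          simp only [h1]
          exact hi⟩)
      intro i j hij
      simp only [Subtype.mk.injEq, Fin.castSucc_inj] at hij
      exact Subtype.ext hij
    exact (by omega : m + 1 ≤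
      Nat.card {i : Fin (m + 1) // A (e i) (e (i + 1))} + bad A C + 1)

theorem deg_eq [Fintype V] (v : V) : deg A v = dg A Finset.univ v := by
  unfold deg dg adj
  rw [Nat.card_eq_fintype_card, Fintype.card_subtype]
  congr!

theorem main [Fintype V] (hA : IsOriented A)
    (δ : ℕ) (hδ3 : 3 ≤ δ) (hδn : 3 * δ ≤ Fintype.card V)
    (hore : ∀ u v : V, u ≠ v → ¬ A u v → ¬ A v u →
      Fintype.card V ≤ deg A u + deg A v)
    (v₀ : V) (hv₀ : deg A v₀ = δ)
    (htour : ∀ u v : V, (A v₀ u ∨ A u v₀) → (A v₀ v ∨ A v v₀) → u ≠ v →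
      A u v ∨ A v u) :
    ∃ e : ZMod (Fintype.card V) ≃ V, IsHamOrientedCycle A e ∧
      Fintype.card V - δ - 2 ≤ sigmaMax A e := by
  set n := Fintype.card V with hn
  set N : Finset V := Finset.univ.filter (fun x => adj A v₀ x) with hN
  have hNc : N.card = δ := by rw [← hv₀, deg_eq]; rfl
  have hNm : ∀ x, x ∈ N ↔ adj A v₀ x := by intro x; simp [hN]
  have hv0N : v₀ ∉ N := by rw [hNm]; exact adj_irr hA v₀
  set K : Finset V := insert v₀ N with hK
  have hKc : K.card = δ + 1 := by rw [hK, Finset.card_insert_of_notMem hv0N, hNc]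
  have hclique : ∀ x ∈ K, ∀ y ∈ K, x ≠ y → adj A x y := by
    intro x hx y hy hxy
    rw [hK, Finset.mem_insert] at hx hy
    rcases hx with rfl | hx
    · rcases hy with rfl | hy
      · exact absurd rfl hxy
      · exact (hNm y).1 hy
    · rcases hy with rfl | hy
      · exact adj_symm ((hNm x).1 hx)
      · exact htour x y ((hNm x).1 hx) ((hNm y).1 hy) hxy
  set X : Finset V := Finset.univ \ K with hX
  have hXc : X.card + (δ + 1) = n := by
    rw [← hKc, hX, Finset.card_sdiff_add_card_eq_card (Finset.subset_univ _), hn, Finset.card_univ]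
  have hXm : ∀ x ∈ X, x ≠ v₀ ∧ ¬ adj A v₀ x := by
    intro x hx
    rw [hX, Finset.mem_sdiff, hK, Finset.mem_insert, hNm] at hx
    tauto
  have hdeg : ∀ x ∈ X, n ≤ dg A Finset.univ x + δ := by
    intro x hx
    have h := hXm x hx
    have := hore v₀ x h.1.symm (fun h' => h.2 (Or.inl h')) (fun h' => h.2 (Or.inr h'))
    rw [hv₀, deg_eq] at this
    omega
  have hmX : ∀ x ∈ X, miss A X x ≤ δ - 2 := by
    intro x hx
    have h1 := hdeg x hx
    have h2 := dg_miss hA (Finset.mem_univ x)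
    rw [Finset.card_univ, ← hn] at h2
    have h3 : miss A X x < miss A Finset.univ x := by
      apply Finset.card_lt_card
      rw [Finset.ssubset_iff_of_subset (Finset.filter_subset_filter _ (Finset.subset_univ _))]
      refine ⟨v₀, ?_, ?_⟩
      · simp only [Finset.mem_filter, Finset.mem_univ, true_and]
        exact ⟨(hXm x hx).1.symm, fun h => (hXm x hx).2 (adj_symm h)⟩
      · simp [hX, hK]
    omega
  have h2N : ∀ x ∈ X, 2 ≤ (N.filter (fun y => adj A x y)).card := by
    intro x hx
    have h1 := hdeg x hx
    have h2 : dg A Finset.univ x ≤ dg A X x + (N.filter (fun y => adj A x y)).card := by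
      unfold dg
      refine le_trans (Finset.card_le_card ?_) (Finset.card_union_le _ _)
      intro y hy
      simp only [Finset.mem_filter, Finset.mem_univ, true_and, Finset.mem_union] at hy ⊢
      have hyv : y ≠ v₀ := by rintro rfl; exact (hXm x hx).2 (adj_symm hy)
      by_cases hyN : y ∈ N
      · right; exact ⟨hyN, hy⟩
      · left; refine ⟨?_, hy⟩
        rw [hX, Finset.mem_sdiff, hK, Finset.mem_insert]; simp [hyv, hyN]
    have h3 := dg_miss hA hx
    omega
  obtain ⟨L, hL, hLl, hLb⟩ := thmT hA X.card X rfl (δ - 2) hmX (by omega)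
  have hL0 : L ≠ [] := by rintro rfl; simp at hLl; omega
  obtain ⟨s, hs⟩ : ∃ w, L.head? = some w := ⟨_, List.head?_eq_some_head hL0⟩
  obtain ⟨t, ht⟩ : ∃ w, L.getLast? = some w := ⟨_, List.getLast?_eq_some_getLast hL0⟩
  have hsX := hL.2.1 s (List.mem_of_mem_head? hs)
  have htX := hL.2.1 t (List.mem_of_mem_getLast? ht)
  obtain ⟨y, hy⟩ := Finset.card_pos.1 (lt_of_lt_of_le two_pos (h2N t htX))
  obtain ⟨y', hy', hyy⟩ := Finset.exists_mem_ne (lt_of_lt_of_le one_lt_two (h2N s hsX)) y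
  rw [Finset.mem_filter] at hy hy'
  have hyK : y ∈ K := by rw [hK]; exact Finset.mem_insert_of_mem hy.1
  have hyK' : y' ∈ K := by rw [hK]; exact Finset.mem_insert_of_mem hy'.1
  set R := (K.erase y).erase y' with hR
  have hRc : R.card + 2 = δ + 1 := by
    rw [hR, Finset.card_erase_of_mem (by simp [hyy, hyK']), Finset.card_erase_of_mem hyK]; omega
  have hRm : ∀ x ∈ R, x ∈ K ∧ x ≠ y ∧ x ≠ y' := by
    intro x hx; rw [hR, Finset.mem_erase, Finset.mem_erase] at hx; tauto
  obtain ⟨T, hTp, hTc⟩ := redei (A := A) R.toList R.nodup_toList (by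
    intro a ha b hb hab
    rw [Finset.mem_toList] at ha hb
    exact hclique a (hRm a ha).1 b (hRm b hb).1 hab)
  have hTm : ∀ x, x ∈ T → x ∈ R := fun x hx => by simpa using hTp.mem_iff.1 hx
  have hTl : T.length = R.card := by rw [hTp.length_eq, Finset.length_toList]
  have hTb := bad_zero T hTc
  have hT0 : T ≠ [] := by rintro rfl; simp at hTl; omega
  obtain ⟨a, ha⟩ : ∃ w, T.head? = some w := ⟨_, List.head?_eq_some_head hT0⟩
  obtain ⟨b, hb⟩ : ∃ w, T.getLast? = some w := ⟨_, List.getLast?_eq_some_getLast hT0⟩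
  have haR := hRm a (hTm a (List.mem_of_mem_head? ha))
  have hbR := hRm b (hTm b (List.mem_of_mem_getLast? hb))
  have hTadj : T.IsChain (adj A) := hTc.imp (fun _ _ h => Or.inl h)
  have c1 : (T ++ [y']).IsChain (adj A) :=
    chain_app hTadj (by simp) hb (by simp) (hclique b hbR.1 y' hyK' hbR.2.2)
  have c2 : ([y] ++ (T ++ [y'])).IsChain (adj A) :=
    chain_app (by simp) c1 (by simp) (by rw [List.head?_append_of_ne_nil _ hT0]; exact ha)
      (hclique y hyK a haR.1 haR.2.1.symm)
  have c3 : (L ++ ([y] ++ (T ++ [y']))).IsChain (adj A) :=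
    chain_app hL.2.2 c2 ht (by simp) hy.2
  have hnd : (L ++ ([y] ++ (T ++ [y']))).Nodup := by
    have hTn : T.Nodup := hTp.nodup_iff.2 R.nodup_toList
    have n1 : (T ++ [y']).Nodup := by
      rw [List.nodup_append]
      refine ⟨hTn, by simp, ?_⟩
      intro x hx z hz
      rw [List.mem_singleton] at hz
      rw [hz]; exact (hRm x (hTm x hx)).2.2
    have n2 : ([y] ++ (T ++ [y'])).Nodup := by
      rw [List.singleton_append, List.nodup_cons]
      refine ⟨?_, n1⟩
      rw [List.mem_append, List.mem_singleton]
      rintro (h | h)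
      · exact (hRm y (hTm y h)).2.1 rfl
      · exact hyy h.symm
    rw [List.nodup_append]
    refine ⟨hL.1, n2, ?_⟩
    intro x hx z hz hxz
    have hxX := hL.2.1 x hx
    rw [hX, Finset.mem_sdiff] at hxX
    apply hxX.2
    rw [hxz]
    rw [List.mem_append, List.mem_append, List.mem_singleton, List.mem_singleton] at hz
    rcases hz with rfl | hz | rfl
    · exact hyK
    · exact (hRm z (hTm z hz)).1
    · exact hyK'
  set C := L ++ ([y] ++ (T ++ [y'])) with hC
  have hCl : C.length = n := by
    rw [hC]; simp only [List.length_append, List.length_singleton]; omega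
  have hCP : IsP A Finset.univ C := ⟨hnd, by simp, c3⟩
  have hCb : bad A C ≤ δ + 1 := by
    have b1 := bad_append (A := A) L ([y] ++ (T ++ [y']))
    have b2 := bad_append (A := A) [y] (T ++ [y'])
    have b3 := bad_append (A := A) T [y']
    simp only [bad_single] at b2 b3
    rw [← hC] at b1
    omega
  obtain ⟨e, he1, he2⟩ := toCycle (A := A) n C hCl (by omega) hnd
    (fun v => hCP.sub (by rw [hCl, hn, Finset.card_univ]) (Finset.mem_univ v)) c3 s y'
    (by rw [hC, List.head?_append_of_ne_nil _ hL0]; exact hs)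
    (by
      rw [hC, ← List.append_assoc, ← List.append_assoc, List.getLast?_append_of_ne_nil _ (by simp)]
      simp) (adj_symm hy'.2)
  refine ⟨e, he1, ?_⟩
  have h1 : sigmaPlus A e ≤ sigmaMax A e := le_max_left _ _
  have h2 : sigmaPlus A e = Nat.card {i : ZMod n // A (e i) (e (i + 1))} := rfl
  omega

end final
end S19

/-- If `D` is an oriented graph on `n` vertices with minimum degree `δ`,
`3 ≤ δ ≤ n/3`, satisfying the Ore-type condition, and there is a vertex `v₀` of degree
`δ` whose neighbourhood induces a tournament, then `D` has a Hamilton oriented cycle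
`C` with `σ_max(C) ≥ n - δ - 2`. -/
theorem stmt19 {V : Type*} [Fintype V] (A : V → V → Prop) (hA : IsOriented A)
    (δ : ℕ) (hδmin : ∀ v, δ ≤ deg A v)
    (hδ3 : 3 ≤ δ) (hδn : 3 * δ ≤ Fintype.card V)
    (hore : ∀ u v : V, u ≠ v → ¬ A u v → ¬ A v u →
      Fintype.card V ≤ deg A u + deg A v)
    (v₀ : V) (hv₀ : deg A v₀ = δ)
    (htour : ∀ u v : V, (A v₀ u ∨ A u v₀) → (A v₀ v ∨ A v v₀) → u ≠ v →
      A u v ∨ A v u) :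
    ∃ e : ZMod (Fintype.card V) ≃ V, IsHamOrientedCycle A e ∧
      Fintype.card V - δ - 2 ≤ sigmaMax A e := by
  exact S19.main hA δ hδ3 hδn hore v₀ hv₀ htour
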